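/- arXiv:2405.07997 — 4 statements merged into one kernel-verified Lean document; each statement's English description precedes it below -/
import Mathlib

section
/- Let f be analytic on the unit disc D with f(0)=0, f'(0)=1, and let β < 1. If |arg((3−2β)/2 − z f''(z)/f'(z))| < arctan(2√3/(5−2β)) for all z in D, then f is starlike. -/
open Complex Metric Real

lemma sector_aux (W : ℂ) (τ : ℝ) (h : |Complex.arg W| < Real.arctan τ) :
    0 ≤ W.re ∧ (0 < W.re → |W.im| < τ * W.re) := by
  have h2 : |Complex.arg W| < π / 2 := h.trans (Real.arctan_lt_pi_div_two τ)
  refine ⟨?_, fun hre => ?_⟩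
  · rcases Complex.abs_arg_lt_pi_div_two_iff.1 h2 with h3 | h3
    · exact h3.le
    · simp [h3]
  · have h4 := abs_lt.1 h2
    have h5 : Complex.arg W = Real.arctan (W.im / W.re) := by
      rw [← Complex.tan_arg, Real.arctan_tan h4.1 h4.2]
    rw [h5] at h
    obtain ⟨h6, h7⟩ := abs_lt.1 h
    rw [← Real.arctan_neg] at h6
    have h8 := Real.arctan_lt_arctan_iff.1 h6
    have h9 := Real.arctan_lt_arctan_iff.1 h7
    rw [lt_div_iff₀ hre] at h8
    rw [div_lt_iff₀ hre] at h9
    rw [abs_lt]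
    constructor <;> linarith

/-- A bound on the real part of the logarithmic derivative times z excludes zeros. -/
lemma nonvanish_aux (h : ℂ → ℂ) (c : ℝ) (hh : DifferentiableOn ℂ h (ball 0 1)) (h0 : h 0 ≠ 0)
    (hc : ∀ z ∈ ball (0 : ℂ) 1, (z * deriv h z / h z).re ≤ c) :
    ∀ z ∈ ball (0 : ℂ) 1, h z ≠ 0 := by
  intro z₁ hz₁ hz
  have hz0 : z₁ ≠ 0 := by rintro rfl; exact h0 hz
  have han : AnalyticOnNhd ℂ h (ball 0 1) := hh.analyticOnNhd isOpen_ball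
  have hne : ¬ ∀ᶠ z in nhds z₁, h z = 0 := by
    intro hev
    have := han.eqOn_zero_of_preconnected_of_eventuallyEq_zero
      (convex_ball (0:ℂ) 1).isPreconnected hz₁ hev
    exact h0 (this (mem_ball_self one_pos))
  obtain ⟨n, g, hg, hg0, hfac⟩ := (han z₁ hz₁).exists_eventuallyEq_pow_smul_nonzero_iff.2 hne
  have hn : n ≠ 0 := by
    rintro rfl
    have := hfac.self_of_nhds
    simp at this
    exact hg0 (this ▸ hz)
  -- punctured formula
  have hform : ∀ᶠ z in nhds z₁, z ≠ z₁ → (z - z₁) * (deriv h z / h z) =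
      n + (z - z₁) * (deriv g z / g z) := by
    filter_upwards [hfac.eventually_nhds, hg.eventually_analyticAt,
      hg.continuousAt.eventually_ne hg0] with z hz1 hz2 hz3 hz4
    have hsub : z - z₁ ≠ 0 := sub_ne_zero.2 hz4
    have hd : deriv h z = n * (z - z₁) ^ (n - 1) * g z + (z - z₁) ^ n * deriv g z := by
      have e : h =ᶠ[nhds z] fun w => (w - z₁) ^ n * g w := hz1
      rw [e.deriv_eq]
      have := (((hasDerivAt_id z).sub_const z₁).pow n).mul hz2.differentiableAt.hasDerivAt
      have h2 := this.deriv
      simp at h2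
      exact h2
    have hv : h z = (z - z₁) ^ n * g z := by simpa using hz1.self_of_nhds
    rw [hd, hv]
    obtain ⟨m, rfl⟩ := Nat.exists_eq_succ_of_ne_zero hn
    simp only [Nat.succ_eq_add_one, Nat.add_sub_cancel]
    field_simp
    ring
  -- the ray
  have hray : Filter.Tendsto (fun s : ℝ => z₁ * (1 + (s:ℂ))) (nhdsWithin 0 (Set.Ioi 0)) (nhds z₁) := by
    have : Continuous (fun s : ℝ => z₁ * (1 + (s:ℂ))) := by fun_prop
    have h1 := this.tendsto 0
    simp at h1
    exact h1.mono_left nhdsWithin_le_nhds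
  let F : ℂ → ℂ := fun z => (z / z₁) * (n + (z - z₁) * (deriv g z / g z))
  have hF : Filter.Tendsto F (nhds z₁) (nhds (n : ℂ)) := by
    have : ContinuousAt F z₁ := by
      have h1 := hg.deriv.continuousAt
      have h2 := hg.continuousAt
      exact (continuousAt_id.div_const _).mul (continuousAt_const.add
        ((continuousAt_id.sub continuousAt_const).mul (h1.div h2 hg0)))
    have h3 : F z₁ = n := by simp [F, hz0]
    rw [← h3]; exact this
  have hL : Filter.Tendsto (fun s : ℝ => (F (z₁ * (1 + (s:ℂ)))).re) (nhdsWithin 0 (Set.Ioi 0))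
      (nhds (n : ℝ)) := by
    have := (Complex.continuous_re.tendsto _).comp (hF.comp hray)
    rw [Complex.natCast_re] at this
    exact this
  have hR : Filter.Tendsto (fun s : ℝ => s * c) (nhdsWithin 0 (Set.Ioi 0)) (nhds (0 : ℝ)) := by
    have : Continuous (fun s : ℝ => s * c) := by fun_prop
    have h1 := this.tendsto 0
    simp at h1
    exact h1.mono_left nhdsWithin_le_nhds
  have hle : (n : ℝ) ≤ 0 := by
    refine le_of_tendsto_of_tendsto hL hR ?_
    filter_upwards [hray.eventually hform, hray.eventually (isOpen_ball.mem_nhds hz₁),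
      self_mem_nhdsWithin] with s hs1 hs2 hs3
    have hs : (0:ℝ) < s := hs3
    have hsC : (s:ℂ) ≠ 0 := by exact_mod_cast hs.ne'
    have hne' : z₁ * (1 + (s:ℂ)) ≠ z₁ := by
      intro hcon
      have : z₁ * (s:ℂ) = 0 := by linear_combination hcon
      exact (mul_ne_zero hz0 hsC) this
    have h1 := hs1 hne'
    have h2 := hc _ hs2
    have h3 : F (z₁ * (1 + (s:ℂ))) = (s:ℂ) * (z₁ * (1 + (s:ℂ)) *
        deriv h (z₁ * (1 + (s:ℂ))) / h (z₁ * (1 + (s:ℂ)))) := by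
      simp only [F]
      rw [← h1]
      field_simp
      ring
    rw [h3, Complex.re_ofReal_mul]
    exact mul_le_mul_of_nonneg_left h2 hs.le
  have : (0:ℝ) < n := by exact_mod_cast Nat.pos_of_ne_zero hn
  linarith

/-- Boundary lemma. -/
lemma boundary_aux (q : ℂ → ℂ) (hq : DifferentiableOn ℂ q (ball 0 1)) (hq0 : q 0 = 1)
    (z₁ : ℂ) (hz₁ : z₁ ∈ ball (0 : ℂ) 1) (hneg : (q z₁).re ≤ 0) :
    ∃ z₀ ∈ ball (0 : ℂ) 1, z₀ ≠ 0 ∧ (q z₀).re = 0 ∧ (z₀ * deriv q z₀).im = 0 ∧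
      (z₀ * deriv q z₀).re ≤ -(1 + (q z₀).im ^ 2) / 2 := by
  have hz₁' : ‖z₁‖ < 1 := by simpa using hz₁
  have hsub : closedBall (0:ℂ) ‖z₁‖ ⊆ ball 0 1 := closedBall_subset_ball hz₁'
  have hcont : ContinuousOn (fun z => (q z).re) (closedBall (0:ℂ) ‖z₁‖) :=
    Complex.continuous_re.comp_continuousOn (hq.continuousOn.mono hsub)
  have hK : IsCompact (closedBall (0:ℂ) ‖z₁‖ ∩ (fun z => (q z).re) ⁻¹' Set.Iic 0) :=
    (isCompact_closedBall _ _).of_isClosed_subset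
      (hcont.preimage_isClosed_of_isClosed isClosed_closedBall isClosed_Iic) Set.inter_subset_left
  obtain ⟨z₀, ⟨hz₀a, hz₀b⟩, hmin⟩ := hK.exists_isMinOn ⟨z₁, by simp, hneg⟩
    (continuous_norm.continuousOn)
  have hz₀b' : (q z₀).re ≤ 0 := hz₀b
  have hz₀ : z₀ ∈ ball (0:ℂ) 1 := hsub hz₀a
  have hz₀1 : ‖z₀‖ ≤ ‖z₁‖ := by simpa using hz₀a
  have hne : z₀ ≠ 0 := by
    rintro rfl
    rw [hq0] at hz₀b'
    norm_num at hz₀b'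
  have hr : 0 < ‖z₀‖ := norm_pos_iff.2 hne
  have hpos : ∀ z : ℂ, ‖z‖ < ‖z₀‖ → 0 < (q z).re := by
    intro z hz
    by_contra! hcon
    have : ‖z₀‖ ≤ ‖z‖ := hmin ⟨by simpa using (hz.le.trans hz₀1), hcon⟩
    linarith
  have hdiff : ∀ z : ℂ, ‖z‖ < 1 → DifferentiableAt ℂ q z := fun z hz =>
    hq.differentiableAt (isOpen_ball.mem_nhds (by simpa using hz))
  have hz₀n : ‖z₀‖ < 1 := by linarith
  -- nonneg on closed ball
  have hnn : ∀ z : ℂ, ‖z‖ = ‖z₀‖ → 0 ≤ (q z).re := by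
    intro z hz
    have h1 : Filter.Tendsto (fun t : ℝ => (t:ℂ) * z) (nhdsWithin 1 (Set.Iio 1)) (nhds z) := by
      have : Continuous (fun t : ℝ => (t:ℂ) * z) := by fun_prop
      have h1 := this.tendsto 1
      simp at h1
      exact h1.mono_left nhdsWithin_le_nhds
    have h2 := (Complex.continuous_re.tendsto _).comp
      (((hdiff z (by linarith)).continuousAt.tendsto).comp h1)
    refine ge_of_tendsto h2 ?_
    filter_upwards [Ioo_mem_nhdsLT (zero_lt_one' ℝ)] with t ht
    apply le_of_lt
    apply hpos
    rw [norm_mul, Complex.norm_real, Real.norm_eq_abs, abs_of_pos ht.1, hz]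
    nlinarith [ht.2]
  have hre0 : (q z₀).re = 0 := le_antisymm hz₀b' (hnn z₀ rfl)
  have hd := (hdiff z₀ hz₀n).hasDerivAt
  refine ⟨z₀, hz₀, hne, hre0, ?_, ?_⟩
  · -- tangential derivative
    let G : ℝ → ℝ := fun θ => (q (z₀ * Complex.exp (θ * I))).re
    have hGd : HasDerivAt G (deriv q z₀ * (z₀ * I)).re 0 := by
      have e1 : HasDerivAt (fun θ : ℂ => z₀ * Complex.exp (θ * I)) (z₀ * I) ((0:ℝ):ℂ) := by
        have := (((hasDerivAt_id ((0:ℝ):ℂ)).mul_const I).cexp).const_mul z₀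
        simpa using this
      have e2 : HasDerivAt q (deriv q z₀) (z₀ * Complex.exp (((0:ℝ):ℂ) * I)) := by simpa using hd
      exact (HasDerivAt.comp (h := fun θ : ℂ => z₀ * Complex.exp (θ * I)) ((0:ℝ):ℂ) e2 e1).real_of_complex
    have hGmin : IsLocalMin G 0 := by
      refine Filter.Eventually.of_forall fun θ => ?_
      have : G 0 = 0 := by simp [G, hre0]
      rw [this]
      apply hnn
      rw [norm_mul, Complex.norm_exp_ofReal_mul_I, mul_one]
    have := hGmin.hasDerivAt_eq_zero hGd
    have e : deriv q z₀ * (z₀ * I) = (z₀ * deriv q z₀) * I := by ring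
    rw [e, Complex.mul_I_re] at this
    linarith
  · -- radial derivative with Schwarz
    let w : ℂ → ℂ := fun z => (1 - q z) / (1 + q z)
    have hne1 : ∀ z : ℂ, ‖z‖ < ‖z₀‖ → 1 + q z ≠ 0 := by
      intro z hz hcon
      have := congrArg Complex.re hcon
      simp at this
      linarith [hpos z hz]
    have hw0 : w 0 = 0 := by simp [w, hq0]
    have hwd : DifferentiableOn ℂ w (ball 0 ‖z₀‖) := by
      intro z hz
      have hz' : ‖z‖ < ‖z₀‖ := by simpa using hz
      have h1 := hdiff z (by linarith)
      exact (((differentiableAt_const _).sub h1).div ((differentiableAt_const _).add h1)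
        (hne1 z hz')).differentiableWithinAt
    have hid : ∀ z : ℂ, ‖1 + q z‖ ^ 2 - ‖1 - q z‖ ^ 2 = 4 * (q z).re := by
      intro z
      rw [← Complex.normSq_eq_norm_sq, ← Complex.normSq_eq_norm_sq, Complex.normSq_apply,
        Complex.normSq_apply]
      simp
      ring
    have hmaps : Set.MapsTo w (ball 0 ‖z₀‖) (ball (w 0) 1) := by
      intro z hz
      have hz' : ‖z‖ < ‖z₀‖ := by simpa using hz
      rw [hw0, mem_ball_zero_iff]
      simp only [w]
      rw [norm_div, div_lt_one (norm_pos_iff.2 (hne1 z hz'))]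
      have := hid z
      have := hpos z hz'
      nlinarith [norm_nonneg (1 + q z), norm_nonneg (1 - q z)]
    let G : ℝ → ℝ := fun t => (t ^ 2 - 1) * ‖1 + q (t * z₀)‖ ^ 2 + 4 * (q (t * z₀)).re
    have hGnn : ∀ t ∈ Set.Ioo (0:ℝ) 1, 0 ≤ G t := by
      intro t ht
      have hn : ‖(t:ℂ) * z₀‖ = t * ‖z₀‖ := by
        rw [norm_mul, Complex.norm_real, Real.norm_eq_abs, abs_of_pos ht.1]
      have hn' : ‖(t:ℂ) * z₀‖ < ‖z₀‖ := by rw [hn]; nlinarith [ht.2]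
      have hs := Complex.dist_le_div_mul_dist_of_mapsTo_ball hwd
        (hmaps.mono_right ball_subset_closedBall)
        (show (t:ℂ) * z₀ ∈ ball (0:ℂ) ‖z₀‖ by simpa using hn')
      rw [hw0, dist_zero_right, dist_zero_right, hn] at hs
      have e : 1 / ‖z₀‖ * (t * ‖z₀‖) = t := by field_simp
      rw [e] at hs
      simp only [w] at hs
      rw [norm_div, div_le_iff₀ (norm_pos_iff.2 (hne1 _ hn'))] at hs
      have h3 : ‖1 - q (t * z₀)‖ ^ 2 ≤ (t * ‖1 + q (t * z₀)‖) ^ 2 :=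
        pow_le_pow_left₀ (norm_nonneg _) hs 2
      have h4 := hid (t * z₀)
      simp only [G]
      nlinarith
    have e1 : HasDerivAt (fun t : ℂ => t * z₀) z₀ ((1:ℝ):ℂ) := by
      simpa using (hasDerivAt_id ((1:ℝ):ℂ)).mul_const z₀
    have e2 : HasDerivAt q (deriv q z₀) (((1:ℝ):ℂ) * z₀) := by simpa using hd
    have e3 := HasDerivAt.comp (h := fun t : ℂ => t * z₀) ((1:ℝ):ℂ) e2 e1
    have e4 : HasDerivAt (fun t : ℝ => (q (t * z₀)).re) (deriv q z₀ * z₀).re 1 :=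
      e3.real_of_complex
    have e5 : DifferentiableAt ℝ (fun t : ℝ => ‖1 + q (t * z₀)‖ ^ 2) 1 := by
      have : DifferentiableAt ℝ (fun t : ℝ => 1 + q (t * z₀)) 1 := by
        have := e3.comp_ofReal
        exact (differentiableAt_const _).add this.differentiableAt
      exact this.norm_sq ℝ
    have hGd : HasDerivAt G (2 * ‖1 + q z₀‖ ^ 2 + 4 * (deriv q z₀ * z₀).re) 1 := by
      have h1 := (((hasDerivAt_id (1:ℝ)).pow 2).sub_const 1).mul e5.hasDerivAt
      have h2 := h1.add (e4.const_mul 4)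
      refine HasDerivAt.congr_deriv (f := G) h2 ?_
      simp
    have hG1 : G 1 = 0 := by simp [G, hre0]
    have hle : 2 * ‖1 + q z₀‖ ^ 2 + 4 * (deriv q z₀ * z₀).re ≤ 0 := by
      have hs := (hasDerivAt_iff_tendsto_slope.1 hGd).mono_left
        (nhdsWithin_mono (1:ℝ) (show Set.Iio (1:ℝ) ⊆ {1}ᶜ from fun x hx => ne_of_lt hx))
      refine le_of_tendsto hs ?_
      filter_upwards [Ioo_mem_nhdsLT (zero_lt_one' ℝ)] with t ht
      rw [slope_def_field, hG1]
      exact div_nonpos_of_nonneg_of_nonpos (by linarith [hGnn t ht]) (by linarith [ht.2])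
    have hn : ‖1 + q z₀‖ ^ 2 = 1 + (q z₀).im ^ 2 := by
      rw [← Complex.normSq_eq_norm_sq, Complex.normSq_apply]
      simp [hre0]
      ring
    rw [hn] at hle
    rw [mul_comm z₀]
    linarith

theorem stmt_2 (f : ℂ → ℂ) (β : ℝ) (hβ : β < 1)
    (hf : DifferentiableOn ℂ f (ball 0 1)) (hf0 : f 0 = 0) (hf1 : deriv f 0 = 1)
    (harg : ∀ z ∈ ball (0 : ℂ) 1,
      |Complex.arg (((3 - 2 * β : ℝ) : ℂ) / 2 - z * deriv (deriv f) z / deriv f z)| <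
        Real.arctan (2 * Real.sqrt 3 / (5 - 2 * β))) :
    ∀ z ∈ ball (0 : ℂ) 1, z ≠ 0 → 0 < (z * deriv f z / f z).re := by
  have hcre : ∀ w : ℂ, (((3 - 2 * β : ℝ) : ℂ) / 2 - w).re = (3 - 2 * β) / 2 - w.re := by
    intro w
    rw [Complex.sub_re, Complex.div_ofNat_re, Complex.ofReal_re]
  have hcim : ∀ w : ℂ, (((3 - 2 * β : ℝ) : ℂ) / 2 - w).im = - w.im := by
    intro w
    rw [Complex.sub_im, Complex.div_ofNat_im, Complex.ofReal_im]
    simp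
  have hdf : DifferentiableOn ℂ (deriv f) (ball 0 1) := hf.deriv isOpen_ball
  have hnz : ∀ z ∈ ball (0:ℂ) 1, deriv f z ≠ 0 := by
    refine nonvanish_aux (deriv f) ((3 - 2 * β) / 2) hdf (by simp [hf1]) fun z hz => ?_
    have := (sector_aux _ _ (harg z hz)).1
    rw [hcre] at this
    linarith
  let q : ℂ → ℂ := fun z => dslope f 0 z / deriv f z
  have hq : DifferentiableOn ℂ q (ball 0 1) :=
    ((Complex.differentiableOn_dslope (ball_mem_nhds 0 one_pos)).2 hf).div hdf hnz
  have hq0 : q 0 = 1 := by simp [q, hf1]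
  have hqe : ∀ z : ℂ, z ≠ 0 → q z = f z / (z * deriv f z) := by
    intro z hz
    simp only [q]
    rw [dslope_of_ne _ hz, slope_def_field, hf0, sub_zero, sub_zero, div_div]
  have hqpos : ∀ z ∈ ball (0:ℂ) 1, 0 < (q z).re := by
    by_contra! hcon
    obtain ⟨z₁, hz₁, hneg⟩ := hcon
    obtain ⟨z, hz, hzne, hre, him, hle⟩ := boundary_aux q hq hq0 z₁ hz₁ hneg
    have hfz := (hf.differentiableAt (isOpen_ball.mem_nhds hz)).hasDerivAt
    have hdfz := (hdf.differentiableAt (isOpen_ball.mem_nhds hz)).hasDerivAt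
    have hd0 := hnz z hz
    have hder : z * deriv q z = 1 - q z * (1 + z * deriv (deriv f) z / deriv f z) := by
      have e : q =ᶠ[nhds z] fun w => f w / (w * deriv f w) := by
        filter_upwards [isOpen_ne.mem_nhds hzne] with w hw using hqe w hw
      have h1 := hfz.div ((hasDerivAt_id z).mul hdfz) (mul_ne_zero hzne hd0)
      have h2 : deriv q z = _ := e.deriv_eq.trans h1.deriv
      rw [h2, hqe z hzne]
      simp only [id, Pi.mul_apply]
      field_simp
    have hsec := (sector_aux _ _ (harg z hz)).2
    rw [hcre, hcim] at hsec
    set w := z * deriv (deriv f) z / deriv f z with hw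
    have r1 := congrArg Complex.re hder
    have r2 := congrArg Complex.im hder
    simp [hre] at r1 r2
    set b := (q z).im with hb
    rw [← Complex.mul_re] at r1
    rw [← Complex.mul_im, him] at r2
    rw [r1] at hle
    have hb0 : b ≠ 0 := by
      intro h
      rw [h] at hle
      norm_num at hle
    have hwre : w.re = -1 := by
      have : b * (1 + w.re) = 0 := by linarith
      rcases mul_eq_zero.1 this with h | h
      · exact absurd h hb0
      · linarith
    rw [hwre] at hsec
    have h5 : (0:ℝ) < 5 - 2 * β := by linarith
    have h6 := hsec (by linarith)
    have h7 : 2 * √3 / (5 - 2 * β) * ((3 - 2 * β) / 2 - -1) = √3 := by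
      field_simp
      ring
    rw [h7, abs_neg] at h6
    have h8 : w.im ^ 2 < 3 := by
      rw [← sq_abs, ← Real.sq_sqrt (show (0:ℝ) ≤ 3 by norm_num)]
      exact pow_lt_pow_left₀ h6 (abs_nonneg _) two_ne_zero
    have h9 : (3 + b ^ 2) / 2 ≤ -(b * w.im) := by linarith
    have hb2 : 0 < b ^ 2 := by positivity
    nlinarith [sq_nonneg (b ^ 2 - 3), sq_nonneg (b + w.im), mul_pos hb2 (sub_pos.2 h8)]
  intro z hz hzne
  have h1 : z * deriv f z / f z = (q z)⁻¹ := by rw [hqe z hzne, inv_div]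
  rw [h1, Complex.inv_re]
  have h2 := hqpos z hz
  exact div_pos h2 (Complex.normSq_pos.2 (by intro h; simp [h] at h2))
end

section
/- Let f be analytic on the unit disc D with f(0)=0, f'(0)=1. If |arg(1/2 − z f''(z)/f'(z))| < arctan(2/√3) for all z in D, then f is starlike. -/
open Complex Metric Real

lemma aux_left_deriv (φ : ℝ → ℝ) (d : ℝ) (h : HasDerivAt φ d 1) (h1 : φ 1 = 0)
    (hpos : ∀ s, 0 < s → s < 1 → 0 ≤ φ s) : d ≤ 0 := by
  have h2 := h.hasDerivWithinAt (s := Set.Iio 1)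
  rw [hasDerivWithinAt_iff_tendsto_slope' (by simp)] at h2
  refine le_of_tendsto h2 ?_
  have : Set.Ioo (0:ℝ) 1 ∈ nhdsWithin (1:ℝ) (Set.Iio 1) := Ioo_mem_nhdsLT (by norm_num)
  filter_upwards [this] with s hs
  rw [slope_def_field, h1]
  apply div_nonpos_of_nonneg_of_nonpos
  · have := hpos s hs.1 hs.2; linarith
  · linarith [hs.2]

lemma aux_re {u : ℝ → ℂ} {u' : ℂ} {x : ℝ} (h : HasDerivAt u u' x) :
    HasDerivAt (fun t => (u t).re) u'.re x :=
  (Complex.reCLM.hasFDerivAt.comp_hasDerivAt x h)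

lemma aux_im {u : ℝ → ℂ} {u' : ℂ} {x : ℝ} (h : HasDerivAt u u' x) :
    HasDerivAt (fun t => (u t).im) u'.im x :=
  (Complex.imCLM.hasFDerivAt.comp_hasDerivAt x h)

lemma aux_radial (g : ℂ → ℂ) (z0 : ℂ) (s : ℝ) (h : DifferentiableAt ℂ g ((s:ℂ) * z0)) :
    HasDerivAt (fun t : ℝ => g ((t:ℂ) * z0)) (deriv g ((s:ℂ) * z0) * z0) s := by
  have h1 : HasDerivAt (fun t : ℝ => (t:ℂ) * z0) (z0) s := by
    simpa using (Complex.ofRealCLM.hasDerivAt (x := s)).mul_const z0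
  exact HasDerivAt.comp (h₂ := g) s h.hasDerivAt h1

lemma aux_jack (g : ℂ → ℂ) (hg : DifferentiableOn ℂ g (ball 0 1)) (g0 : g 0 = 1)
    (z1 : ℂ) (hz1 : z1 ∈ ball (0:ℂ) 1) (hre : (g z1).re ≤ 0) :
    ∃ z0 ∈ ball (0:ℂ) 1, z0 ≠ 0 ∧ (g z0).re = 0 ∧ (z0 * deriv g z0).im = 0 ∧
      (z0 * deriv g z0).re ≤ -(1 + (g z0).im ^ 2) / 2 := by
  have hz1' : ‖z1‖ < 1 := by simpa using hz1
  have hsub : closedBall (0:ℂ) ‖z1‖ ⊆ ball 0 1 := closedBall_subset_ball hz1'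
  have hcont : ContinuousOn (fun z => (g z).re) (closedBall (0:ℂ) ‖z1‖) :=
    Complex.continuous_re.comp_continuousOn (hg.continuousOn.mono hsub)
  have hK : IsCompact (closedBall (0:ℂ) ‖z1‖ ∩ (fun z => (g z).re) ⁻¹' Set.Iic 0) :=
    (isCompact_closedBall _ _).of_isClosed_subset
      (hcont.preimage_isClosed_of_isClosed isClosed_closedBall isClosed_Iic)
      Set.inter_subset_left
  obtain ⟨z0, ⟨hz0a, hz0b⟩, hmin⟩ := hK.exists_isMinOn ⟨z1, by simp, hre⟩ continuous_norm.continuousOn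
  have hz0b : (g z0).re ≤ 0 := hz0b
  have hz0 : z0 ∈ ball (0:ℂ) 1 := hsub hz0a
  have hz0a' : ‖z0‖ ≤ ‖z1‖ := by simpa using hz0a
  have hz0n : ‖z0‖ < 1 := lt_of_le_of_lt hz0a' hz1'
  have hin : ∀ z : ℂ, ‖z‖ < ‖z0‖ → 0 < (g z).re := by
    intro z hz
    by_contra hc
    have := hmin (a := z) ⟨by simp; linarith, not_lt.mp hc⟩
    have : ‖z0‖ ≤ ‖z‖ := this
    linarith
  have hne : z0 ≠ 0 := by
    rintro rfl
    rw [g0] at hz0b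
    norm_num at hz0b
  have hnp : 0 < ‖z0‖ := norm_pos_iff.mpr hne
  have hdiff : ∀ z : ℂ, ‖z‖ < 1 → DifferentiableAt ℂ g z := fun z hz =>
    hg.differentiableAt (isOpen_ball.mem_nhds (by simpa using hz))
  -- boundary nonnegativity
  have hbd : ∀ z : ℂ, ‖z‖ = ‖z0‖ → 0 ≤ (g z).re := by
    intro z hz
    have h1 : HasDerivAt (fun t : ℝ => g ((t:ℂ) * z)) (deriv g (((1:ℝ):ℂ) * z) * z) 1 :=
      aux_radial g z 1 (hdiff _ (by simpa [hz] using hz0n))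
    have h2 := (aux_re h1).continuousAt.continuousWithinAt (s := Set.Iio (1:ℝ))
    have h3 : Filter.Tendsto (fun t : ℝ => (g ((t:ℂ) * z)).re) (nhdsWithin 1 (Set.Iio 1))
        (nhds (g z).re) := by simpa [ContinuousWithinAt] using h2
    refine ge_of_tendsto h3 ?_
    have : Set.Ioo (0:ℝ) 1 ∈ nhdsWithin (1:ℝ) (Set.Iio 1) := Ioo_mem_nhdsLT (by norm_num)
    filter_upwards [this] with s hs
    refine (hin _ ?_).le
    rw [norm_mul, hz, Complex.norm_real, Real.norm_of_nonneg hs.1.le]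
    nlinarith [hs.2]
  have hre0 : (g z0).re = 0 := le_antisymm hz0b (hbd z0 rfl)
  refine ⟨z0, hz0, hne, hre0, ?_, ?_⟩
  · -- tangential
    have h1 : HasDerivAt (fun θ : ℝ => Complex.exp (θ * I) * z0) (I * z0) 0 := by
      have : HasDerivAt (fun θ : ℝ => (θ:ℂ) * I) I 0 := by
        simpa using (Complex.ofRealCLM.hasDerivAt (x := 0)).mul_const I
      simpa using this.cexp.mul_const z0
    have h2 : HasDerivAt g (deriv g z0) (Complex.exp (((0:ℝ):ℂ) * I) * z0) := by
      simpa using (hdiff z0 hz0n).hasDerivAt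
    have h3 := aux_re (HasDerivAt.comp (h₂ := g) (0:ℝ) h2 h1)
    have hm : IsLocalMin (fun θ : ℝ => ((g ∘ fun θ : ℝ => Complex.exp (θ * I) * z0) θ).re) 0 := by
      refine Filter.Eventually.of_forall fun θ => ?_
      simp only [Function.comp]
      have : 0 ≤ (g (Complex.exp (θ * I) * z0)).re :=
        hbd _ (by rw [norm_mul, Complex.norm_exp_ofReal_mul_I, one_mul])
      simpa [hre0] using this
    have h4 := hm.hasDerivAt_eq_zero h3
    have h5 : deriv g z0 * (I * z0) = I * (z0 * deriv g z0) := by ring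
    rw [h5] at h4
    simp at h4 ⊢
    linarith
  · -- radial
    have hplus : ∀ z : ℂ, ‖z‖ < ‖z0‖ → 1 + g z ≠ 0 := by
      intro z hz h
      have := congrArg Complex.re h
      simp at this
      linarith [hin z hz]
    have hwd : DifferentiableOn ℂ (fun z => (1 - g z) / (1 + g z)) (ball 0 ‖z0‖) := by
      intro z hz
      have hz' : ‖z‖ < ‖z0‖ := by simpa using hz
      have hd := hdiff z (hz'.trans hz0n)
      exact (((differentiableAt_const _).sub hd).div ((differentiableAt_const _).add hd)
        (hplus z hz')).differentiableWithinAt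
    have hwm : Set.MapsTo (fun z => (1 - g z) / (1 + g z)) (ball 0 ‖z0‖)
        (ball ((fun z => (1 - g z) / (1 + g z)) 0) 1) := by
      intro z hz
      have hz' : ‖z‖ < ‖z0‖ := by simpa using hz
      have hp := hin z hz'
      simp only [g0, sub_self, zero_div, mem_ball_zero_iff, norm_div]
      rw [div_lt_one (norm_pos_iff.mpr (hplus z hz'))]
      refine lt_of_pow_lt_pow_left₀ 2 (norm_nonneg _) ?_
      rw [← Complex.normSq_eq_norm_sq, ← Complex.normSq_eq_norm_sq, Complex.normSq_apply,
        Complex.normSq_apply]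
      simp
      nlinarith
    have hbound : ∀ s : ℝ, 0 < s → s < 1 →
        0 ≤ 2 * (1 + s ^ 2) * (g ((s:ℂ) * z0)).re
          - (1 - s ^ 2) * (1 + (g ((s:ℂ) * z0)).re ^ 2 + (g ((s:ℂ) * z0)).im ^ 2) := by
      intro s hs0 hs1
      have hn : ‖(s:ℂ) * z0‖ = s * ‖z0‖ := by
        rw [norm_mul, Complex.norm_real, Real.norm_of_nonneg hs0.le]
      have hlt : ‖(s:ℂ) * z0‖ < ‖z0‖ := by rw [hn]; nlinarith
      have := Complex.dist_le_div_mul_dist_of_mapsTo_ball hwd (hwm.mono_right ball_subset_closedBall) (z := (s:ℂ) * z0)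
        (by simpa using hlt)
      simp only [g0, sub_self, zero_div, dist_zero_right, norm_div] at this
      rw [hn, div_le_iff₀ (norm_pos_iff.mpr (hplus _ hlt))] at this
      have e : 1 / ‖z0‖ * (s * ‖z0‖) = s := by field_simp
      rw [e] at this
      have h2 := pow_le_pow_left₀ (norm_nonneg _) this 2
      rw [mul_pow, ← Complex.normSq_eq_norm_sq, ← Complex.normSq_eq_norm_sq, Complex.normSq_apply,
        Complex.normSq_apply] at h2
      simp only [sub_re, sub_im, add_re, add_im, one_re, one_im] at h2
      nlinarith
    have h1 : HasDerivAt (fun t : ℝ => g ((t:ℂ) * z0)) (deriv g (((1:ℝ):ℂ) * z0) * z0) 1 :=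
      aux_radial g z0 1 (hdiff _ (by simpa using hz0n))
    have hr := aux_re h1
    have hi := aux_im h1
    have hs : HasDerivAt (fun s : ℝ => s ^ 2) (2 * 1) 1 := by
      simpa using hasDerivAt_pow 2 (1:ℝ)
    have hφ := (((hs.const_add 1).const_mul 2).mul hr).sub
      ((hs.const_sub 1).mul (((hr.pow 2).const_add 1).add (hi.pow 2)))
    have := aux_left_deriv _ _ hφ (by simp [hre0]) (by
      intro s h0 h1
      simpa using hbound s h0 h1)
    simp [hre0] at this
    simp
    linarith

lemma aux_nonvanish (h : ℂ → ℂ) (hh : DifferentiableOn ℂ h (ball 0 1)) (h0 : h 0 = 1)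
    (hq : ∀ z ∈ ball (0:ℂ) 1, 0 ≤ ((1:ℂ) / 2 - z * deriv h z / h z).re) :
    ∀ z ∈ ball (0:ℂ) 1, h z ≠ 0 := by
  intro z0 hz0 hzero
  have hz0n : ‖z0‖ < 1 := by simpa using hz0
  have hne : z0 ≠ 0 := by rintro rfl; rw [h0] at hzero; exact one_ne_zero hzero
  have hnp : 0 < ‖z0‖ := norm_pos_iff.mpr hne
  have hR : 1 < 1 / ‖z0‖ := by rw [lt_div_iff₀ hnp]; linarith
  have hmem : ∀ s : ℝ, 0 < s → s < 1 / ‖z0‖ → (s:ℂ) * z0 ∈ ball (0:ℂ) 1 := by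
    intro s h0 h1
    rw [mem_ball_zero_iff, norm_mul, Complex.norm_real, Real.norm_of_nonneg h0.le]
    rwa [lt_div_iff₀ hnp] at h1
  have hder : ∀ s : ℝ, 0 < s → s < 1 / ‖z0‖ → ∃ d : ℝ, d ≤ 0 ∧
      HasDerivAt (fun s : ℝ => ((h ((s:ℂ) * z0)).re ^ 2 + (h ((s:ℂ) * z0)).im ^ 2) / s) d s := by
    intro s hs0 hs1
    have hm := hmem s hs0 hs1
    have h1 := aux_radial h z0 s (hh.differentiableAt (isOpen_ball.mem_nhds hm))
    have h2 := (((aux_re h1).pow 2).add ((aux_im h1).pow 2)).div (hasDerivAt_id s) hs0.ne'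
    refine ⟨_, ?_, h2⟩
    apply div_nonpos_of_nonpos_of_nonneg _ (sq_nonneg _)
    have hqz := hq _ hm
    generalize hw : h ((s:ℂ) * z0) = w at *
    generalize hw' : deriv h ((s:ℂ) * z0) = w' at *
    by_cases hw0 : w = 0
    · simp [hw0, hw]
    have hN : 0 < w.re ^ 2 + w.im ^ 2 := by
      have := Complex.normSq_pos.mpr hw0
      rw [Complex.normSq_apply] at this; nlinarith
    have e : (s:ℂ) * z0 * w' / w = (s:ℂ) * (w' * z0) / w := by ring
    rw [e] at hqz
    generalize w' * z0 = v at *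
    have e2 : ((1:ℂ) / 2 - (s:ℂ) * v / w).re
        = 1 / 2 - s * (v.re * w.re + v.im * w.im) / (w.re ^ 2 + w.im ^ 2) := by
      simp [Complex.div_re, Complex.normSq_apply]
      field_simp
    rw [e2, sub_nonneg, div_le_iff₀ hN] at hqz
    simp [hw]
    nlinarith
  have hanti : AntitoneOn (fun s : ℝ => ((h ((s:ℂ) * z0)).re ^ 2 + (h ((s:ℂ) * z0)).im ^ 2) / s)
      (Set.Ioo 0 (1 / ‖z0‖)) := by
    apply antitoneOn_of_deriv_nonpos (convex_Ioo _ _)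
    · intro s hs
      obtain ⟨d, -, hd⟩ := hder s hs.1 hs.2
      exact hd.continuousAt.continuousWithinAt
    · intro s hs
      rw [interior_Ioo] at hs
      obtain ⟨d, -, hd⟩ := hder s hs.1 hs.2
      exact hd.differentiableAt.differentiableWithinAt
    · intro s hs
      rw [interior_Ioo] at hs
      obtain ⟨d, hd0, hd⟩ := hder s hs.1 hs.2
      rw [hd.deriv]; exact hd0
  have hz : ∀ s : ℝ, 1 < s → s < 1 / ‖z0‖ → h ((s:ℂ) * z0) = 0 := by
    intro s hs1 hs2
    have := hanti (a := 1) (b := s) ⟨one_pos, hR⟩ ⟨by linarith, hs2⟩ hs1.le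
    simp [hzero] at this
    rw [div_le_iff₀ (by linarith)] at this
    have a : (h ((s:ℂ) * z0)).re = 0 := by nlinarith [sq_nonneg (h ((s:ℂ) * z0)).re, sq_nonneg (h ((s:ℂ) * z0)).im]
    have b : (h ((s:ℂ) * z0)).im = 0 := by nlinarith [sq_nonneg (h ((s:ℂ) * z0)).re, sq_nonneg (h ((s:ℂ) * z0)).im]
    exact Complex.ext a b
  have han : AnalyticOnNhd ℂ h (ball 0 1) := hh.analyticOnNhd isOpen_ball
  have hfreq : ∃ᶠ z in nhdsWithin z0 {z0}ᶜ, h z = 0 := by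
    have ht : Filter.Tendsto (fun s : ℝ => (s:ℂ) * z0) (nhdsWithin 1 (Set.Ioi 1))
        (nhdsWithin z0 {z0}ᶜ) := by
      apply tendsto_nhdsWithin_of_tendsto_nhds_of_eventually_within
      · have : ContinuousAt (fun s : ℝ => (s:ℂ) * z0) 1 := by fun_prop
        simpa [ContinuousAt] using this.tendsto.mono_left nhdsWithin_le_nhds
      · filter_upwards [self_mem_nhdsWithin] with s hs
        intro hc
        have hc : (s:ℂ) * z0 = z0 := hc
        have : (s:ℂ) = 1 := by
          apply mul_right_cancel₀ hne; rw [hc, one_mul]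
        have : s = 1 := by exact_mod_cast this
        exact absurd this (ne_of_gt hs)
    refine ht.frequently (Filter.Eventually.frequently ?_)
    filter_upwards [Ioo_mem_nhdsGT hR] with s hs
    exact hz s hs.1 hs.2
  have := han.eqOn_zero_of_preconnected_of_frequently_eq_zero
    (convex_ball (0:ℂ) 1).isPreconnected hz0 hfreq (x := 0) (by simp)
  rw [h0] at this
  exact one_ne_zero this

theorem stmt_3 (f : ℂ → ℂ)
    (hf : DifferentiableOn ℂ f (ball 0 1)) (hf0 : f 0 = 0) (hf1 : deriv f 0 = 1)
    (harg : ∀ z ∈ ball (0 : ℂ) 1,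
      |Complex.arg ((1 : ℂ) / 2 - z * deriv (deriv f) z / deriv f z)| <
        Real.arctan (2 / Real.sqrt 3)) :
    ∀ z ∈ ball (0 : ℂ) 1, z ≠ 0 → 0 < (z * deriv f z / f z).re := by
  have hdf : DifferentiableOn ℂ (deriv f) (ball 0 1) := hf.deriv isOpen_ball
  have hnv : ∀ z ∈ ball (0:ℂ) 1, deriv f z ≠ 0 := by
    apply aux_nonvanish _ hdf hf1
    intro z hz
    rw [← Complex.abs_arg_le_pi_div_two_iff]
    exact ((harg z hz).trans (Real.arctan_lt_pi_div_two _)).le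
  set g : ℂ → ℂ := fun z => dslope f 0 z / deriv f z with hgdef
  have hgd : DifferentiableOn ℂ g (ball 0 1) := by
    apply DifferentiableOn.div _ hdf hnv
    exact (Complex.differentiableOn_dslope (isOpen_ball.mem_nhds (by simp))).mpr hf
  have hg0 : g 0 = 1 := by simp [hgdef, hf1]
  have hgz : ∀ z : ℂ, z ≠ 0 → g z = f z / (z * deriv f z) := by
    intro z hz
    simp only [hgdef]
    rw [dslope_of_ne _ hz, slope_def_field, hf0]
    simp only [sub_zero, div_div]
  have key : ∀ z ∈ ball (0:ℂ) 1, 0 < (g z).re := by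
    intro z1 hz1
    by_contra hc
    obtain ⟨z0, hz0, hne, hre, him, hle⟩ := aux_jack g hgd hg0 z1 hz1 (not_lt.mp hc)
    have hfd := (hf.differentiableAt (isOpen_ball.mem_nhds hz0)).hasDerivAt
    have hdfd := (hdf.differentiableAt (isOpen_ball.mem_nhds hz0)).hasDerivAt
    have hn := hnv z0 hz0
    have hG : HasDerivAt g _ z0 :=
      (hfd.div ((hasDerivAt_id z0).mul hdfd) (mul_ne_zero hne hn)).congr_of_eventuallyEq (by
        filter_upwards [isOpen_ne.mem_nhds hne] with z hz
        exact hgz z hz)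
    have hode : z0 * deriv g z0 = 1 - 3 / 2 * g z0
        + g z0 * ((1 : ℂ) / 2 - z0 * deriv (deriv f) z0 / deriv f z0) := by
      rw [hG.deriv, hgz z0 hne]
      simp only [id, Pi.mul_apply]
      field_simp
      ring
    have hq := harg z0 hz0
    generalize (1 : ℂ) / 2 - z0 * deriv (deriv f) z0 / deriv f z0 = q at *
    rw [hode] at him hle
    simp [hre] at him hle
    set t := (g z0).im with ht
    have ht0 : t ≠ 0 := by
      intro h0; rw [h0] at hle; norm_num at hle
    have hqre : q.re = 3 / 2 := by
      apply mul_left_cancel₀ ht0; linarith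
    have hs3 : 0 < Real.sqrt 3 := by positivity
    have hs3' : Real.sqrt 3 ^ 2 = 3 := Real.sq_sqrt (by norm_num)
    have htan : Complex.arg q = Real.arctan (q.im / q.re) := by
      rw [← Complex.tan_arg, Real.arctan_tan]
      · have := (abs_lt.mp (hq.trans (Real.arctan_lt_pi_div_two _))).1; linarith
      · exact (abs_lt.mp (hq.trans (Real.arctan_lt_pi_div_two _))).2
    have hab := abs_lt.mp hq
    rw [htan, ← Real.arctan_neg, Real.arctan_lt_arctan_iff, Real.arctan_lt_arctan_iff, hqre] at hab
    have e : 2 / Real.sqrt 3 = Real.sqrt 3 / (3 / 2) := by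
      field_simp; linarith
    rw [e] at hab
    have b1 : q.im < Real.sqrt 3 := by
      have := hab.2
      rwa [div_lt_div_iff_of_pos_right (by norm_num)] at this
    have b2 : -Real.sqrt 3 < q.im := by
      have := hab.1
      rw [← neg_div] at this
      rwa [div_lt_div_iff_of_pos_right (by norm_num)] at this
    rcases lt_or_gt_of_ne ht0 with h | h
    · nlinarith [sq_nonneg (t + Real.sqrt 3)]
    · nlinarith [sq_nonneg (t - Real.sqrt 3)]
  intro z hz hne
  have hk := key z hz
  have e : z * deriv f z / f z = (g z)⁻¹ := by rw [hgz z hne, inv_div]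
  rw [e, Complex.inv_re]
  apply div_pos hk
  apply Complex.normSq_pos.mpr
  intro h
  rw [h] at hk
  simp at hk
end

section
/- Let f be analytic on the unit disc D with f(0)=0, f'(0)=1. If |z f''(z)/f'(z)| < √3 for all z in D, then f is starlike. -/
open Complex Metric Real

/-- a zero of an analytic function cannot have bounded logarithmic derivative around it -/
lemma aux_ne_zero (h : ℂ → ℂ) (a : ℂ) (C : ℝ) (ha : AnalyticAt ℂ h a)
    (hne : ¬ ∀ᶠ z in nhds a, h z = 0)
    (hb : ∀ᶠ z in nhdsWithin a {a}ᶜ, h z ≠ 0 → ‖deriv h z‖ ≤ C * ‖h z‖) : h a ≠ 0 := by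
  intro h0
  obtain ⟨n, k, hk, hka, hev⟩ := (ha.exists_eventuallyEq_pow_smul_nonzero_iff).2 hne
  have hn : n ≠ 0 := by
    rintro rfl
    have := hev.self_of_nhds
    simp [h0] at this
    exact hka this.symm
  obtain ⟨m, rfl⟩ := Nat.exists_eq_succ_of_ne_zero hn
  have hkd : ∀ᶠ z in nhds a, DifferentiableAt ℂ k z :=
    hk.eventually_analyticAt.mono fun z hz => hz.differentiableAt
  have hk0 : ∀ᶠ z in nhds a, k z ≠ 0 := hk.continuousAt.eventually_ne hka
  have hev2 : ∀ᶠ z in nhds a, deriv h z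
      = (z - a) ^ m * ((m + 1 : ℂ) * k z + (z - a) * deriv k z) := by
    filter_upwards [hev.eventually_nhds, hkd] with z hz hd
    have e : h =ᶠ[nhds z] fun z => (z - a) ^ (m + 1) * k z := hz
    rw [e.deriv_eq]
    have := ((((hasDerivAt_id z).sub_const a).pow (m + 1)).mul hd.hasDerivAt).deriv
    simp only [id] at this
    refine Eq.trans this ?_
    simp
    ring
  have key : ∀ᶠ z in nhdsWithin a {a}ᶜ,
      ‖(m + 1 : ℂ) * k z + (z - a) * deriv k z‖ ≤ C * (‖z - a‖ * ‖k z‖) := by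
    filter_upwards [hb, hev2.filter_mono nhdsWithin_le_nhds, hev.filter_mono nhdsWithin_le_nhds,
      hk0.filter_mono nhdsWithin_le_nhds, self_mem_nhdsWithin] with z h1 h2 h3 h4 h5
    have h6 : z - a ≠ 0 := sub_ne_zero.2 h5
    have h7 : h z ≠ 0 := by
      rw [h3, smul_eq_mul]
      exact mul_ne_zero (pow_ne_zero _ h6) h4
    have h8 := h1 h7
    rw [h2, h3, smul_eq_mul, norm_mul, norm_mul, norm_pow, norm_pow, pow_succ] at h8
    have : 0 < ‖z - a‖ ^ m := by positivity
    refine le_of_mul_le_mul_left ?_ this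
    linarith
  have hc1 : ContinuousAt (fun z => ‖(m + 1 : ℂ) * k z + (z - a) * deriv k z‖) a := by
    have := hk.continuousAt
    have := hk.deriv.continuousAt
    fun_prop
  have hc2 : ContinuousAt (fun z => C * (‖z - a‖ * ‖k z‖)) a := by
    have := hk.continuousAt
    fun_prop
  have := le_of_tendsto_of_tendsto (hc1.tendsto.mono_left nhdsWithin_le_nhds)
    (hc2.tendsto.mono_left nhdsWithin_le_nhds) key
  simp at this
  have h1 : 0 < ‖(m + 1 : ℂ)‖ := norm_pos_iff.2 (Nat.cast_add_one_ne_zero (R := ℂ) m)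
  have h2 : 0 < ‖k a‖ := norm_pos_iff.2 hka
  exact absurd this (not_le.2 (mul_pos h1 h2))

/-- Miller-Mocanu lemma -/
lemma aux_jack_s4 (q : ℂ → ℂ) (z₀ : ℂ) (hz₀ : z₀ ≠ 0) (hq0 : q 0 = 1)
    (hqd : ∀ z, ‖z‖ ≤ ‖z₀‖ → DifferentiableAt ℂ q z)
    (hpos : ∀ z, ‖z‖ < ‖z₀‖ → 0 < (q z).re) (hz : (q z₀).re ≤ 0) :
    (q z₀).re = 0 ∧ (z₀ * deriv q z₀).im = 0 ∧
      (1 + (q z₀).im ^ 2) / 2 ≤ -(z₀ * deriv q z₀).re := by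
  have hr : 0 < ‖z₀‖ := norm_pos_iff.2 hz₀
  have hnn : ∀ z, ‖z‖ ≤ ‖z₀‖ → 0 ≤ (q z).re := by
    intro z hz
    have hcl : z ∈ closure (ball (0 : ℂ) ‖z₀‖) := by
      rw [closure_ball _ hr.ne']; simpa using hz
    have hc : ContinuousWithinAt (fun z => (q z).re) (ball (0 : ℂ) ‖z₀‖) z :=
      (continuous_re.continuousAt.comp (hqd z hz).continuousAt).continuousWithinAt
    have := hc.mem_closure hcl (t := Set.Ici 0) (fun y hy => (hpos y (by simpa using hy)).le)
    simpa using this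
  have hre : (q z₀).re = 0 := le_antisymm hz (hnn _ le_rfl)
  have hqz := (hqd z₀ le_rfl).hasDerivAt
  refine ⟨hre, ?_, ?_⟩
  · -- derivative along the circle
    have h1 : HasDerivAt (fun θ : ℝ => z₀ * Complex.exp (θ * I)) (z₀ * I) 0 := by
      have : HasDerivAt (fun θ : ℝ => ((θ : ℂ) * I)) I 0 := by
        simpa using (Complex.ofRealCLM.hasDerivAt (x := (0:ℝ))).mul_const I
      simpa using (this.cexp).const_mul z₀
    have h2 : HasDerivAt (fun θ : ℝ => q (z₀ * Complex.exp (θ * I))) (deriv q z₀ * (z₀ * I)) 0 := by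
      have e : z₀ * Complex.exp ((0 : ℝ) * I) = z₀ := by simp
      exact HasDerivAt.comp (h₂ := q) (0:ℝ) (by rw [e]; exact hqz) h1
    have h3 : HasDerivAt (fun θ : ℝ => (q (z₀ * Complex.exp (θ * I))).re)
        (deriv q z₀ * (z₀ * I)).re 0 :=
      (Complex.reCLM.hasFDerivAt.comp_hasDerivAt (0:ℝ) h2)
    have h4 : IsLocalMin (fun θ : ℝ => (q (z₀ * Complex.exp (θ * I))).re) 0 := by
      refine Filter.Eventually.of_forall fun θ => ?_
      simp only [ofReal_zero, zero_mul, Complex.exp_zero, mul_one, hre]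
      exact hnn _ (by simp [Complex.norm_exp_ofReal_mul_I])
    have h5 := h4.hasDerivAt_eq_zero h3
    simp at h5 ⊢
    linarith
  · have h1 : HasDerivAt (fun t : ℝ => (t : ℂ) * z₀) z₀ 1 := by
      simpa using (Complex.ofRealCLM.hasDerivAt (x := (1:ℝ))).mul_const z₀
    have h2 : HasDerivAt (fun t : ℝ => q (t * z₀)) (deriv q z₀ * z₀) 1 := by
      have e : ((1 : ℝ) : ℂ) * z₀ = z₀ := by simp
      exact HasDerivAt.comp (h₂ := q) (1:ℝ) (by rw [e]; exact hqz) h1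
    have h3 : HasDerivAt (fun t : ℝ => (q (t * z₀)).re) (deriv q z₀ * z₀).re 1 :=
      (Complex.reCLM.hasFDerivAt.comp_hasDerivAt (1:ℝ) h2)
    have h4 := hasDerivAt_iff_tendsto_slope.1 h3
    have h5 := h4.mono_left (nhdsWithin_mono (1:ℝ) (s := Set.Iio 1) (t := {1}ᶜ)
      (fun x hx => ne_of_lt hx))
    -- Schwarz
    have hden : ∀ z, ‖z‖ < ‖z₀‖ → 1 + q z ≠ 0 := by
      intro z hz h
      have := congrArg Complex.re h
      have := hpos z hz
      simp at *
      linarith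
    have hsch : ∀ z, ‖z‖ < ‖z₀‖ → ‖1 - q z‖ * ‖z₀‖ ≤ ‖z‖ * ‖1 + q z‖ := by
      intro z hz
      have hmap : Set.MapsTo (fun z => (1 - q z) / (1 + q z)) (ball 0 ‖z₀‖)
          (ball ((fun z => (1 - q z) / (1 + q z)) 0) 1) := by
        intro y hy
        have hy : ‖y‖ < ‖z₀‖ := by simpa using hy
        have hp := hpos y hy
        simp only [hq0, sub_self, zero_div, mem_ball, dist_zero_right, norm_div]
        rw [div_lt_one (norm_pos_iff.2 (hden y hy))]
        refine lt_of_pow_lt_pow_left₀ 2 (norm_nonneg _) ?_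
        rw [← Complex.normSq_eq_norm_sq, ← Complex.normSq_eq_norm_sq, normSq_apply, normSq_apply]
        simp
        nlinarith
      have hd : DifferentiableOn ℂ (fun z => (1 - q z) / (1 + q z)) (ball 0 ‖z₀‖) := by
        intro y hy
        have hy : ‖y‖ < ‖z₀‖ := by simpa using hy
        have := hqd y hy.le
        exact ((differentiableAt_const _).sub this |>.div
          ((differentiableAt_const _).add this) (hden y hy)).differentiableWithinAt
      have := Complex.dist_le_div_mul_dist_of_mapsTo_ball hd
        (hmap.mono_right ball_subset_closedBall) (z := z) (by simpa using hz)
      simp only [hq0, sub_self, zero_div, dist_zero_right, norm_div] at this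
      rw [div_le_iff₀ (norm_pos_iff.2 (hden z hz))] at this
      calc _ ≤ (1 / ‖z₀‖ * ‖z‖ * ‖1 + q z‖) * ‖z₀‖ := by gcongr
        _ = _ := by field_simp
    have h6 : ∀ᶠ t : ℝ in nhdsWithin 1 (Set.Iio 1),
        (1 + t) * (1 + ‖q (t * z₀)‖ ^ 2) / (2 * (1 + t ^ 2)) ≤
          - slope (fun t : ℝ => (q (t * z₀)).re) 1 t := by
      have : ∀ᶠ t : ℝ in nhdsWithin 1 (Set.Iio 1), 0 < t :=
        (eventually_gt_nhds one_pos).filter_mono nhdsWithin_le_nhds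
      filter_upwards [this, self_mem_nhdsWithin] with t ht0 ht1
      have ht1 : t < 1 := ht1
      have hnt : ‖(t : ℂ) * z₀‖ = t * ‖z₀‖ := by simp [abs_of_pos ht0]
      have hlt : ‖(t : ℂ) * z₀‖ < ‖z₀‖ := by rw [hnt]; nlinarith
      have hs := hsch _ hlt
      rw [hnt] at hs
      have hs' : ‖1 - q (t * z₀)‖ ≤ t * ‖1 + q (t * z₀)‖ := by
        refine le_of_mul_le_mul_right ?_ hr
        linarith
      have hs2 := pow_le_pow_left₀ (norm_nonneg _) hs' 2
      rw [mul_pow, ← Complex.normSq_eq_norm_sq, ← Complex.normSq_eq_norm_sq,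
        normSq_apply, normSq_apply] at hs2
      rw [← Complex.normSq_eq_norm_sq, normSq_apply, slope_def_field]
      simp only [ofReal_one, one_mul, hre, sub_zero]
      rw [← div_neg, neg_sub, div_le_div_iff₀ (by positivity) (by linarith)]
      simp at hs2
      nlinarith
    have hcq : ContinuousAt (fun t : ℝ => q (t * z₀)) 1 := h2.continuousAt
    have hc : ContinuousAt (fun t : ℝ => (1 + t) * (1 + ‖q (t * z₀)‖ ^ 2) / (2 * (1 + t ^ 2))) 1 := by
      refine ContinuousAt.div ?_ ?_ (by norm_num)
      · exact (continuousAt_const.add continuousAt_id).mul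
          (continuousAt_const.add (hcq.norm.pow 2))
      · fun_prop
    have h7 := le_of_tendsto_of_tendsto (hc.tendsto.mono_left nhdsWithin_le_nhds) h5.neg h6
    rw [← Complex.normSq_eq_norm_sq, normSq_apply] at h7
    simp only [ofReal_one, one_mul, hre] at h7
    rw [mul_comm (deriv q z₀)] at h7
    linarith

theorem stmt_4 (f : ℂ → ℂ)
    (hf : DifferentiableOn ℂ f (ball 0 1)) (hf0 : f 0 = 0) (hf1 : deriv f 0 = 1)
    (hb : ∀ z ∈ ball (0 : ℂ) 1, ‖z * deriv (deriv f) z / deriv f z‖ < Real.sqrt 3) :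
    ∀ z ∈ ball (0 : ℂ) 1, z ≠ 0 → 0 < (z * deriv f z / f z).re := by
  have hfa : AnalyticOnNhd ℂ f (ball 0 1) := hf.analyticOnNhd isOpen_ball
  have hha : AnalyticOnNhd ℂ (deriv f) (ball 0 1) := hfa.deriv
  have hne : ∀ z ∈ ball (0 : ℂ) 1, deriv f z ≠ 0 := by
    intro a ha h0
    have ha0 : a ≠ 0 := by rintro rfl; simp [hf1] at h0
    have hap : 0 < ‖a‖ := norm_pos_iff.2 ha0
    refine aux_ne_zero (deriv f) a (√3 / (‖a‖ / 2)) (hha a ha) ?_ ?_ h0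
    · intro hev
      have := hha.eqOn_zero_of_preconnected_of_eventuallyEq_zero
        (convex_ball (0:ℂ) 1).isPreconnected ha hev (mem_ball_self one_pos)
      simp [hf1] at this
    · have e1 : ∀ᶠ z in nhds a, ‖a‖ / 2 < ‖z‖ :=
        continuous_norm.continuousAt.eventually (lt_mem_nhds (by linarith : ‖a‖ / 2 < ‖a‖))
      have e2 : ∀ᶠ z in nhds a, z ∈ ball (0:ℂ) 1 := isOpen_ball.mem_nhds ha
      filter_upwards [e1.filter_mono nhdsWithin_le_nhds, e2.filter_mono nhdsWithin_le_nhds]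
        with z h1 h2 h3
      have h4 := (hb z h2).le
      rw [norm_div, norm_mul, div_le_iff₀ (norm_pos_iff.2 h3)] at h4
      rw [div_mul_eq_mul_div, le_div_iff₀ (by positivity)]
      nlinarith [norm_nonneg (deriv (deriv f) z)]
  have hds : DifferentiableOn ℂ (dslope f 0) (ball 0 1) :=
    (Complex.differentiableOn_dslope (ball_mem_nhds 0 one_pos)).2 hf
  obtain ⟨q, hq⟩ : ∃ q : ℂ → ℂ, q = fun z => dslope f 0 z / deriv f z := ⟨_, rfl⟩
  have hqd : ∀ z ∈ ball (0:ℂ) 1, DifferentiableAt ℂ q z := by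
    intro z hz
    rw [hq]
    exact (hds.differentiableAt (isOpen_ball.mem_nhds hz)).div (hha z hz).differentiableAt (hne z hz)
  have hq0 : q 0 = 1 := by simp [hq, hf1]
  have hqf : ∀ z ∈ ball (0:ℂ) 1, z * q z * deriv f z = f z := by
    intro z hz
    have h1 := hne z hz
    have h2 := sub_smul_dslope f 0 z
    simp [hf0] at h2
    rw [hq]
    field_simp
    exact h2
  have hqe : ∀ z ∈ ball (0:ℂ) 1,
      1 - z * deriv q z = q z * (1 + z * deriv (deriv f) z / deriv f z) := by
    intro z hz
    have e : (fun z => z * q z * deriv f z) =ᶠ[nhds z] f :=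
      Filter.eventuallyEq_of_mem (isOpen_ball.mem_nhds hz) hqf
    have h1 := (((hasDerivAt_id z).mul (hqd z hz).hasDerivAt).mul
      (hha z hz).differentiableAt.hasDerivAt).deriv
    have h2 := e.deriv_eq
    have h3 := h1.symm.trans h2
    have h4 := hne z hz
    simp at h3
    field_simp
    linear_combination -h3
  have hpos : ∀ z ∈ ball (0:ℂ) 1, 0 < (q z).re := by
    by_contra hcon
    push Not at hcon
    obtain ⟨z₁, hz₁, hq₁⟩ := hcon
    have hz₁' : ‖z₁‖ < 1 := by simpa using hz₁
    have hsub : closedBall (0:ℂ) ‖z₁‖ ⊆ ball 0 1 := closedBall_subset_ball hz₁'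
    have hcont : ContinuousOn (fun z => (q z).re) (closedBall (0:ℂ) ‖z₁‖) := fun z hz =>
      (continuous_re.continuousAt.comp (hqd z (hsub hz)).continuousAt).continuousWithinAt
    have hK : IsCompact (closedBall (0:ℂ) ‖z₁‖ ∩ (fun z => (q z).re) ⁻¹' Set.Iic 0) :=
      (isCompact_closedBall (0:ℂ) ‖z₁‖).of_isClosed_subset
        (hcont.preimage_isClosed_of_isClosed isClosed_closedBall isClosed_Iic) Set.inter_subset_left
    obtain ⟨z₀, ⟨hz₀, hz₀q⟩, hmin⟩ := hK.exists_isMinOn ⟨z₁, by simp, hq₁⟩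
      continuous_norm.continuousOn
    have hz₀q : (q z₀).re ≤ 0 := hz₀q
    have hz₀n : ‖z₀‖ ≤ ‖z₁‖ := by simpa using hz₀
    have hz₀b := hsub hz₀
    have hz₀0 : z₀ ≠ 0 := by
      rintro rfl
      simp [hq0] at hz₀q
      linarith
    obtain ⟨a1, a2, a3⟩ := aux_jack_s4 q z₀ hz₀0 hq0
      (fun z hz => hqd z (by simp; linarith))
      (fun z hz => by
        by_contra hc
        have := hmin (⟨by simp; linarith, not_lt.1 hc⟩ :
          z ∈ closedBall (0:ℂ) ‖z₁‖ ∩ (fun z => (q z).re) ⁻¹' Set.Iic 0)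
        simp at this
        linarith) hz₀q
    have b1 := hqe z₀ hz₀b
    have b2 := hb z₀ hz₀b
    generalize z₀ * deriv (deriv f) z₀ / deriv f z₀ = g at b1 b2
    generalize z₀ * deriv q z₀ = d at *
    generalize q z₀ = w at *
    have c1 := congrArg Complex.re b1
    have c2 := congrArg Complex.im b1
    have c3 : g.re * g.re + g.im * g.im < 3 := by
      rw [← normSq_apply, Complex.normSq_eq_norm_sq]
      have := pow_lt_pow_left₀ b2 (norm_nonneg _) two_ne_zero
      rwa [Real.sq_sqrt (by norm_num)] at this
    simp [a1, a2] at c1 c2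
    have hw : w.im ≠ 0 := by
      intro h
      rw [h] at c1 a3
      linarith
    have c4 : g.re = -1 := by
      rcases c2 with h | h
      · exact absurd h hw
      · linarith
    rw [c4] at c3
    have c5 : (3 + w.im ^ 2) / 2 ≤ -(w.im * g.im) := by linarith
    have hw2 : 0 < w.im ^ 2 := by positivity
    have c6 : ((3 + w.im ^ 2) / 2) ^ 2 ≤ (-(w.im * g.im)) ^ 2 :=
      pow_le_pow_left₀ (by positivity) c5 2
    nlinarith [sq_nonneg (w.im ^ 2 - 3)]
  intro z hz hz0
  have h1 := hpos z hz
  have h2 := hqf z hz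
  have h3 := hne z hz
  have e : z * deriv f z / f z = (q z)⁻¹ := by
    have : q z ≠ 0 := by intro h; simp [h] at h1
    rw [← h2]
    field_simp
  rw [e, Complex.inv_re]
  have : q z ≠ 0 := by intro h; simp [h] at h1
  exact div_pos h1 (normSq_pos.2 this)
end

section
/- Let f be analytic on the unit disc D with f(0)=0, f'(0)=1, and let γ ≥ 0. If |arg(z f'(z)/f(z) + γ)| < arctan(1/(1+γ)) for all z in D, then Re(f(z)/z) > 0 for all z in D (with f(z)/z interpreted as 1 at z = 0). -/
open Complex Metric Real

lemma left_nonneg (F : ℝ → ℝ) (F' : ℝ) (h : HasDerivAt F F' 1)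
    (hle : ∀ s ∈ Set.Ioo (0:ℝ) 1, F s ≤ F 1) : 0 ≤ F' := by
  have h1 := (hasDerivAt_iff_tendsto_slope_left_right.1 h).1
  refine ge_of_tendsto h1 ?_
  filter_upwards [Ioo_mem_nhdsLT (show (0:ℝ) < 1 by norm_num)] with s hs
  rw [slope_def_field]
  exact div_nonneg_of_nonpos (by linarith [hle s hs]) (by linarith [hs.2])

lemma hasDeriv_re (c : ℝ → ℂ) (c' : ℂ) (s : ℝ) (h : HasDerivAt c c' s) :
    HasDerivAt (fun t => (c t).re) c'.re s :=
  (Complex.reCLM.hasFDerivAt.comp_hasDerivAt s h)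

lemma hasDeriv_im (c : ℝ → ℂ) (c' : ℂ) (s : ℝ) (h : HasDerivAt c c' s) :
    HasDerivAt (fun t => (c t).im) c'.im s :=
  (Complex.imCLM.hasFDerivAt.comp_hasDerivAt s h)

lemma hasDeriv_ray (g : ℂ → ℂ) (g' z : ℂ) (s : ℝ) (h : HasDerivAt g g' (s * z)) :
    HasDerivAt (fun t : ℝ => g (t * z)) (z * g') s := by
  have h1 : HasDerivAt (fun t : ℂ => t * z) z (s : ℂ) := by
    simpa using (hasDerivAt_id (s : ℂ)).mul_const z
  have h2 := HasDerivAt.comp (s : ℂ) (h₂ := g) (h := fun t : ℂ => t * z) h h1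
  have h3 := h2.comp_ofReal
  rw [mul_comm]
  exact h3

lemma ray_mem {z : ℂ} (hz : z ∈ ball (0 : ℂ) 1) {s : ℝ} (hs : s ∈ Set.Ioc (0:ℝ) 1) :
    (s : ℂ) * z ∈ ball (0 : ℂ) 1 := by
  simp only [mem_ball_zero_iff, norm_mul, Complex.norm_real, Real.norm_eq_abs,
    abs_of_pos hs.1] at *
  nlinarith [hs.1, hs.2, norm_nonneg z]

lemma no_zero (f : ℂ → ℂ) (γ : ℝ)
    (hf : DifferentiableOn ℂ f (ball 0 1)) (hf0 : f 0 = 0) (hf1 : deriv f 0 = 1)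
    (hre : ∀ z ∈ ball (0 : ℂ) 1, 0 ≤ (z * deriv f z / f z + (γ : ℂ)).re)
    (z : ℂ) (hz : z ∈ ball (0 : ℂ) 1) (hz0 : z ≠ 0) : f z ≠ 0 := by
  intro hfz
  have hd : ∀ w ∈ ball (0 : ℂ) 1, HasDerivAt f (deriv f w) w := fun w hw =>
    (hf.differentiableAt (isOpen_ball.mem_nhds hw)).hasDerivAt
  let φ : ℝ → ℝ := fun s => ((f (s * z)).re ^ 2 + (f (s * z)).im ^ 2) * s ^ (2 * γ)
  have hφ : ∀ s ∈ Set.Ioc (0:ℝ) 1, HasDerivAt φ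
      ((2 * (f (s * z)).re * (z * deriv f (s * z)).re
        + 2 * (f (s * z)).im * (z * deriv f (s * z)).im) * s ^ (2 * γ)
        + ((f (s * z)).re ^ 2 + (f (s * z)).im ^ 2) * (2 * γ * s ^ (2 * γ - 1))) s := by
    intro s hs
    have h := hasDeriv_ray f _ z s (hd _ (ray_mem hz hs))
    have h1 := hasDeriv_re _ _ _ h
    have h2 := hasDeriv_im _ _ _ h
    have h3 := Real.hasDerivAt_rpow_const (x := s) (p := 2 * γ) (Or.inl hs.1.ne')
    have := ((h1.pow 2).add (h2.pow 2)).mul h3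
    refine this.congr_deriv ?_
    simp
  have hmono : MonotoneOn φ (Set.Ioc 0 1) := by
    refine monotoneOn_of_hasDerivWithinAt_nonneg (convex_Ioc 0 1)
      (fun s hs => (hφ s hs).continuousAt.continuousWithinAt)
      (fun s hs => (hφ s (interior_subset hs)).hasDerivWithinAt) ?_
    intro s hs
    have hs := interior_subset hs
    have h := hre _ (ray_mem hz hs)
    have hp : (0:ℝ) < s ^ (2 * γ - 1) := Real.rpow_pos_of_pos hs.1 _
    have e : s ^ (2 * γ) = s ^ (2 * γ - 1) * s := by
      rw [Real.rpow_sub_one hs.1.ne']; field_simp [hs.1.ne']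
    by_cases h0 : f (s * z) = 0
    · simp [h0]
    · have hN : 0 < (f (s * z)).re ^ 2 + (f (s * z)).im ^ 2 := by
        have := Complex.normSq_pos.2 h0
        rw [Complex.normSq_apply] at this
        nlinarith
      have h' : 0 ≤ s * ((f (s * z)).re * (z * deriv f (s * z)).re
        + (f (s * z)).im * (z * deriv f (s * z)).im)
          + γ * ((f (s * z)).re ^ 2 + (f (s * z)).im ^ 2) := by
        rw [mul_assoc (s : ℂ) z, Complex.add_re, Complex.div_re, Complex.normSq_apply,
          Complex.re_ofReal_mul, Complex.im_ofReal_mul, Complex.ofReal_re] at h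
        rw [← pow_two, ← pow_two] at h
        generalize (f (s * z)).re = u at *
        generalize (f (s * z)).im = v at *
        generalize (z * deriv f (s * z)).re = p at *
        generalize (z * deriv f (s * z)).im = q at *
        have h2 := mul_nonneg h hN.le
        have h3 : (s * p * u / (u ^ 2 + v ^ 2) + s * q * v / (u ^ 2 + v ^ 2) + γ) * (u ^ 2 + v ^ 2)
            = s * (u * p + v * q) + γ * (u ^ 2 + v ^ 2) := by
          have hN' := hN.ne'
          field_simp
        rwa [h3] at h2
      rw [e]
      have := mul_nonneg hp.le h'
      nlinarith
  have hzero : ∀ s ∈ Set.Ioc (0:ℝ) 1, f (s * z) = 0 := by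
    intro s hs
    have h := hmono hs (show (1:ℝ) ∈ Set.Ioc (0:ℝ) 1 by simp) hs.2
    have hp : (0:ℝ) < s ^ (2 * γ) := Real.rpow_pos_of_pos hs.1 _
    simp only [φ, Complex.ofReal_one, one_mul, hfz] at h
    simp only [Complex.zero_re, Complex.zero_im] at h
    have h2 : (f (s * z)).re ^ 2 + (f (s * z)).im ^ 2 ≤ 0 := by
      by_contra hc
      push Not at hc
      have := mul_pos hc hp
      linarith
    apply Complex.ext
    · simp only [Complex.zero_re]; nlinarith [sq_nonneg (f (s * z)).re, sq_nonneg (f (s * z)).im]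
    · simp only [Complex.zero_im]; nlinarith [sq_nonneg (f (s * z)).re, sq_nonneg (f (s * z)).im]
  have h0 := hd 0 (by simp)
  rw [hf1] at h0
  have hne := h0.eventually_ne (c := 0) one_ne_zero
  rw [eventually_nhdsWithin_iff, Metric.eventually_nhds_iff] at hne
  obtain ⟨ε, hε, hne⟩ := hne
  have hs : min 1 (ε / 2) ∈ Set.Ioc (0:ℝ) 1 := ⟨by positivity, min_le_left _ _⟩
  refine hne (y := ((min 1 (ε / 2) : ℝ) : ℂ) * z) ?_ ?_ (hzero _ hs)
  · rw [dist_zero_right, norm_mul, Complex.norm_real, Real.norm_eq_abs, abs_of_pos hs.1]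
    have : ‖z‖ < 1 := by simpa using hz
    have := min_le_right 1 (ε / 2)
    nlinarith [hs.1, norm_nonneg z]
  · simp only [Set.mem_compl_iff, Set.mem_singleton_iff, mul_eq_zero, hz0, or_false]
    exact_mod_cast hs.1.ne'

lemma jack (g : ℂ → ℂ) (hg : DifferentiableOn ℂ g (ball 0 1)) (hg0 : g 0 = 1)
    (z : ℂ) (hz : z ∈ ball (0 : ℂ) 1) (hz0 : z ≠ 0) (hgz : (g z).re = 0)
    (hpos : ∀ w, ‖w‖ < ‖z‖ → 0 < (g w).re) :
    (z * deriv g z).im = 0 ∧ 1 + (g z).im ^ 2 ≤ - 2 * (z * deriv g z).re := by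
  have hr : 0 < ‖z‖ := norm_pos_iff.2 hz0
  have hz1 : ‖z‖ < 1 := by simpa using hz
  have hd : ∀ w ∈ ball (0 : ℂ) 1, HasDerivAt g (deriv g w) w := fun w hw =>
    (hg.differentiableAt (isOpen_ball.mem_nhds hw)).hasDerivAt
  have hclos : ∀ w, ‖w‖ = ‖z‖ → 0 ≤ (g w).re := by
    intro w hw
    have hwb : w ∈ ball (0 : ℂ) 1 := by simpa [hw] using hz
    have hdw : HasDerivAt g (deriv g w) (((1:ℝ) : ℂ) * w) := by simpa using hd w hwb
    have hc := (hasDeriv_re _ _ _ (hasDeriv_ray g _ w 1 hdw)).continuousAt.tendsto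
    have hc := hc.mono_left (nhdsWithin_le_nhds (s := Set.Iio 1))
    simp only [Complex.ofReal_one, one_mul] at hc
    refine ge_of_tendsto hc ?_
    filter_upwards [Ioo_mem_nhdsLT (show (0:ℝ) < 1 by norm_num)] with s hs
    refine (hpos _ ?_).le
    rw [norm_mul, Complex.norm_real, Real.norm_eq_abs, abs_of_pos hs.1, hw]
    nlinarith [hs.2]
  constructor
  · have h1 : HasDerivAt (fun t : ℂ => z * Complex.exp (t * I)) (z * I) ((0:ℝ) : ℂ) := by
      have := (((hasDerivAt_id ((0:ℝ) : ℂ)).mul_const I).cexp).const_mul z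
      simpa using this
    have hg1 : HasDerivAt g (deriv g z) (z * Complex.exp (((0:ℝ) : ℂ) * I)) := by
      simpa using hd z hz
    have h2 := (HasDerivAt.comp ((0:ℝ) : ℂ) (h₂ := g) hg1 h1).comp_ofReal
    have h3 := hasDeriv_re _ _ _ h2
    have hmin : IsLocalMin (fun t : ℝ => ((g ∘ fun t : ℂ => z * Complex.exp (t * I)) t).re) 0 := by
      refine Filter.Eventually.of_forall fun t => ?_
      have := hclos (z * Complex.exp (t * I)) (by rw [norm_mul, Complex.norm_exp_ofReal_mul_I, mul_one])
      simpa [hgz] using this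
    have h4 := hmin.hasDerivAt_eq_zero h3
    have h5 : deriv g z * (z * I) = (z * deriv g z) * I := by ring
    rw [h5, Complex.mul_I_re] at h4
    linarith
  · have hsch : ∀ w, ‖w‖ < ‖z‖ → ‖g w - 1‖ ≤ ‖w‖ / ‖z‖ * ‖g w + 1‖ := by
      intro w hw
      have hne : ∀ y, ‖y‖ < ‖z‖ → g y + 1 ≠ 0 := by
        intro y hy h
        have := hpos y hy
        have h' := congrArg Complex.re h
        simp at h'
        linarith
      have hdiff : DifferentiableOn ℂ (fun y => (g y - 1) / (g y + 1)) (ball 0 ‖z‖) := by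
        have hgr := hg.mono (ball_subset_ball (x := (0:ℂ)) hz1.le)
        exact (hgr.sub_const 1).div (hgr.add_const 1) fun y hy => hne y (by simpa using hy)
      have hmaps : Set.MapsTo (fun y => (g y - 1) / (g y + 1)) (ball 0 ‖z‖)
          (closedBall ((fun y => (g y - 1) / (g y + 1)) 0) 1) := by
        intro y hy
        have hy' : ‖y‖ < ‖z‖ := by simpa using hy
        simp only [hg0, sub_self, zero_div, mem_closedBall_zero_iff, norm_div]
        refine div_le_one_of_le₀ ?_ (norm_nonneg _)
        refine le_of_sq_le_sq ?_ (norm_nonneg _)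
        rw [← Complex.normSq_eq_norm_sq, ← Complex.normSq_eq_norm_sq, Complex.normSq_apply,
          Complex.normSq_apply]
        simp
        nlinarith [hpos y hy']
      have h := Complex.dist_le_div_mul_dist_of_mapsTo_ball hdiff hmaps (z := w) (by simpa using hw)
      simp only [hg0, sub_self, zero_div, dist_zero_right, norm_div] at h
      rw [div_le_iff₀ (norm_pos_iff.2 (hne w hw))] at h
      calc _ ≤ _ := h
        _ = _ := by ring
    have hdz : HasDerivAt g (deriv g z) (((1:ℝ) : ℂ) * z) := by simpa using hd z hz
    have h := hasDeriv_ray g _ z 1 hdz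
    have hu := hasDeriv_re _ _ _ h
    have hv := hasDeriv_im _ _ _ h
    have hF := (((hu.sub_const 1).pow 2).add (hv.pow 2)).sub
      (((hasDerivAt_id (1:ℝ)).pow 2).mul (((hu.add_const 1).pow 2).add (hv.pow 2)))
    have h0 := left_nonneg _ _ hF (by
      intro s hs
      have hns : ‖(s : ℂ) * z‖ = s * ‖z‖ := by
        rw [norm_mul, Complex.norm_real, Real.norm_eq_abs, abs_of_pos hs.1]
      have hh := hsch (s * z) (by rw [hns]; nlinarith [hs.2])
      rw [hns, mul_div_cancel_right₀ _ hr.ne'] at hh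
      have hh2 := pow_le_pow_left₀ (norm_nonneg _) hh 2
      rw [mul_pow, ← Complex.normSq_eq_norm_sq, ← Complex.normSq_eq_norm_sq, Complex.normSq_apply,
          Complex.normSq_apply] at hh2
      simp at hh2
      simp [hgz]
      nlinarith)
    simp [hgz] at h0
    simp
    nlinarith

theorem stmt_5 (f : ℂ → ℂ) (γ : ℝ) (hγ : 0 ≤ γ)
    (hf : DifferentiableOn ℂ f (ball 0 1)) (hf0 : f 0 = 0) (hf1 : deriv f 0 = 1)
    (harg : ∀ z ∈ ball (0 : ℂ) 1,
      |Complex.arg (z * deriv f z / f z + (γ : ℂ))| < Real.arctan (1 / (1 + γ))) :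
    ∀ z ∈ ball (0 : ℂ) 1, 0 < (if z = 0 then 1 else f z / z).re := by
  have hre : ∀ z ∈ ball (0 : ℂ) 1, 0 ≤ (z * deriv f z / f z + (γ : ℂ)).re := by
    intro z hz
    rcases Complex.abs_arg_lt_pi_div_two_iff.1 ((harg z hz).trans (Real.arctan_lt_pi_div_two _))
      with h | h
    · exact h.le
    · rw [h]; simp
  have hnz := no_zero f γ hf hf0 hf1 hre
  set g := dslope f 0 with hgdef
  have hg : DifferentiableOn ℂ g (ball 0 1) :=
    (Complex.differentiableOn_dslope (ball_mem_nhds 0 one_pos)).2 hf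
  have hg0 : g 0 = 1 := by rw [hgdef, dslope_same, hf1]
  have hfg : ∀ z, f z = z * g z := by
    intro z
    have := sub_smul_dslope f 0 z
    simp only [sub_zero, hf0, smul_eq_mul] at this
    exact this.symm
  have key : ∀ z ∈ ball (0 : ℂ) 1, 0 < (g z).re := by
    intro z1 hz1
    by_contra hneg
    push Not at hneg
    have hz1' : ‖z1‖ < 1 := by simpa using hz1
    have hsub : closedBall (0:ℂ) ‖z1‖ ⊆ ball 0 1 := closedBall_subset_ball hz1'
    have hcont : ContinuousOn (fun z => (g z).re) (closedBall (0:ℂ) ‖z1‖) :=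
      Complex.continuous_re.comp_continuousOn (hg.continuousOn.mono hsub)
    have hK : IsCompact (closedBall (0:ℂ) ‖z1‖ ∩ (fun z => (g z).re) ⁻¹' Set.Iic 0) :=
      (isCompact_closedBall _ _).of_isClosed_subset
        (hcont.preimage_isClosed_of_isClosed isClosed_closedBall isClosed_Iic) Set.inter_subset_left
    obtain ⟨z, hzK, hmin⟩ := hK.exists_isMinOn ⟨z1, by simp, hneg⟩ continuous_norm.continuousOn
    have hz : z ∈ ball (0:ℂ) 1 := hsub hzK.1
    have hzle : ‖z‖ ≤ ‖z1‖ := by simpa using hzK.1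
    have hgle : (g z).re ≤ 0 := hzK.2
    have hz0 : z ≠ 0 := by
      rintro rfl
      rw [hg0] at hgle
      norm_num at hgle
    have hpos : ∀ w, ‖w‖ < ‖z‖ → 0 < (g w).re := by
      intro w hw
      by_contra hc
      push Not at hc
      have : ‖z‖ ≤ ‖w‖ := hmin ⟨by simpa using (hw.trans_le hzle).le, hc⟩
      linarith
    have hd := (hg.differentiableAt (isOpen_ball.mem_nhds hz)).hasDerivAt
    have hgz : (g z).re = 0 := by
      refine le_antisymm hgle ?_
      have hdw : HasDerivAt g (deriv g z) (((1:ℝ) : ℂ) * z) := by simpa using hd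
      have hc := (hasDeriv_re _ _ _ (hasDeriv_ray g _ z 1 hdw)).continuousAt.tendsto
      have hc := hc.mono_left (nhdsWithin_le_nhds (s := Set.Iio 1))
      simp only [Complex.ofReal_one, one_mul] at hc
      refine ge_of_tendsto hc ?_
      filter_upwards [Ioo_mem_nhdsLT (show (0:ℝ) < 1 by norm_num)] with s hs
      refine (hpos _ ?_).le
      rw [norm_mul, Complex.norm_real, Real.norm_eq_abs, abs_of_pos hs.1]
      nlinarith [hs.2, norm_pos_iff.2 hz0]
    obtain ⟨him, hk⟩ := jack g hg hg0 z hz hz0 hgz hpos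
    have hgne : g z ≠ 0 := by
      intro h
      exact hnz z hz hz0 (by rw [hfg, h, mul_zero])
    have ha : (g z).im ≠ 0 := fun h => hgne (Complex.ext hgz h)
    have hdf : deriv f z = g z + z * deriv g z := by
      have h1 : f = fun z => z * g z := funext hfg
      have h2 := (hasDerivAt_id z).mul hd
      have h3 : HasDerivAt f (1 * g z + z * deriv g z) z := by
        rw [h1]; exact h2
      rw [h3.deriv, one_mul]
    have hval : z * deriv f z / f z + (γ : ℂ) = (1 + γ : ℝ) + z * deriv g z / g z := by
      rw [hdf, hfg z]
      push_cast
      field_simp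
      ring
    have h := harg z hz
    rw [hval] at h
    set a := (g z).im with hadef
    set k := (z * deriv g z).re with hkdef
    have e1 : (((1 + γ : ℝ) : ℂ) + z * deriv g z / g z).re = 1 + γ := by
      rw [Complex.add_re, Complex.div_re, him, hgz]; simp
    have e2 : (((1 + γ : ℝ) : ℂ) + z * deriv g z / g z).im = - k / a := by
      rw [Complex.add_im, Complex.div_im, him, hgz, Complex.normSq_apply, hgz]
      simp only [← hadef, ← hkdef, Complex.ofReal_im]
      field_simp
      ring
    have hlt := h.trans (Real.arctan_lt_pi_div_two _)
    have htan := Complex.tan_arg (((1 + γ : ℝ) : ℂ) + z * deriv g z / g z)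
    rw [e1, e2] at htan
    have harc := Real.arctan_tan (abs_lt.1 hlt).1 (abs_lt.1 hlt).2
    rw [htan] at harc
    rw [← harc, abs_lt, ← Real.arctan_neg] at h
    have h1 := Real.arctan_strictMono.lt_iff_lt.1 h.1
    have h2 := Real.arctan_strictMono.lt_iff_lt.1 h.2
    have hg' : 0 < 1 + γ := by linarith
    rw [← neg_div, div_lt_div_iff_of_pos_right hg'] at h1
    rw [div_lt_div_iff_of_pos_right hg'] at h2
    rcases lt_or_gt_of_ne ha with hlt | hgt
    · rw [lt_div_iff_of_neg hlt] at h1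
      nlinarith [sq_nonneg (a + 1)]
    · rw [div_lt_iff₀ hgt] at h2
      nlinarith [sq_nonneg (a - 1)]
  intro z hz
  split_ifs with h0
  · simp
  · have := key z hz
    rwa [hfg z, mul_div_cancel_left₀ _ h0]
end
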